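/- Let g ≥ 1 be an integer. For every real number c with 1 − 2g < c ≤ 0 there exist φ̃₁, …, φ̃_{2g} ∈ 𝒯 such that the translation number of the product of commutators [φ̃₁, φ̃₂] ∘ [φ̃₃, φ̃₄] ∘ ⋯ ∘ [φ̃_{2g−1}, φ̃_{2g}] is equal to c. -/

import Mathlib

/-- `ψ` belongs to `𝒯`: it is an increasing homeomorphism of `ℝ` (an order
isomorphism of `ℝ`, which is automatically a homeomorphism) commuting with the
translation `t ↦ t + 1`, i.e. a lift of an orientation-preserving circle
homeomorphism. -/
def CircleLift (ψ : ℝ ≃o ℝ) : Prop := ∀ t : ℝ, ψ (t + 1) = ψ t + 1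

/-- The composition `ψ₁ ∘ ψ₂ ∘ ⋯ ∘ ψ_k` of a list `[ψ₁, ψ₂, …, ψ_k]`. -/
def composeList (L : List (ℝ ≃o ℝ)) : ℝ ≃o ℝ :=
  L.foldr (fun f acc => acc.trans f) (OrderIso.refl ℝ)

/-- The commutator `[f, g] = f ∘ g ∘ f⁻¹ ∘ g⁻¹`. -/
def commOI (f g : ℝ ≃o ℝ) : ℝ ≃o ℝ := (g.symm.trans f.symm).trans (g.trans f)

/-- A lift with prescribed values at two points. -/
theorem exists_lift_two_points (t u a w : ℝ) (ha : 0 < a) (ha' : a < 1) (hw : 0 < w)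
    (hw' : w < 1) : ∃ f : ℝ ≃o ℝ, CircleLift f ∧ f t = u ∧ f (t + a) = u + w := by
  have key : ∀ p : ℝ, 0 < p → ∀ x : ℝ, 0 ≤ Int.fract x ^ p ∧ Int.fract x ^ p < 1 := fun p hp x =>
    ⟨Real.rpow_nonneg (Int.fract_nonneg x) p,
      Real.rpow_lt_one (Int.fract_nonneg x) (Int.fract_lt_one x) hp⟩
  let F : ℝ → ℝ → ℝ := fun p x => (⌊x⌋ : ℝ) + Int.fract x ^ p
  have hfl : ∀ p : ℝ, 0 < p → ∀ x, ⌊F p x⌋ = ⌊x⌋ := by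
    intro p hp x
    rw [Int.floor_eq_iff]
    have := key p hp x
    constructor <;> simp only [F] <;> linarith
  have hfr : ∀ p : ℝ, 0 < p → ∀ x, Int.fract (F p x) = Int.fract x ^ p := by
    intro p hp x
    rw [Int.fract, hfl p hp x]
    simp [F]
  have hmono : ∀ p : ℝ, 0 < p → StrictMono (F p) := by
    intro p hp x y hxy
    have hx := key p hp x
    have hy := key p hp y
    rcases (Int.floor_mono hxy.le).lt_or_eq with h | h
    · have : (⌊x⌋ : ℝ) + 1 ≤ ⌊y⌋ := by exact_mod_cast h
      simp only [F]
      linarith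
    · have h2 : Int.fract x < Int.fract y := by
        rw [Int.fract, Int.fract, h]; linarith
      have := Real.rpow_lt_rpow (Int.fract_nonneg x) h2 hp
      simp only [F, h]
      linarith
  have hinv : ∀ p : ℝ, 0 < p → Function.RightInverse (F p⁻¹) (F p) := by
    intro p hp x
    show (⌊F p⁻¹ x⌋ : ℝ) + Int.fract (F p⁻¹ x) ^ p = x
    rw [hfl _ (inv_pos.2 hp), hfr _ (inv_pos.2 hp), Real.rpow_inv_rpow (Int.fract_nonneg x) hp.ne']
    exact Int.floor_add_fract x
  let p := Real.logb a w
  have hp : 0 < p := Real.logb_pos_of_base_lt_one ha ha' hw hw'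
  have hap : a ^ p = w := Real.rpow_logb ha ha'.ne hw
  let f0 : ℝ ≃o ℝ := StrictMono.orderIsoOfRightInverse (F p) (hmono p hp) (F p⁻¹) (hinv p hp)
  have hf0 : ∀ x, f0 x = F p x := fun x => rfl
  refine ⟨((OrderIso.addRight (-t)).trans f0).trans (OrderIso.addRight u), ?_, ?_, ?_⟩
  · intro x
    simp only [OrderIso.trans_apply, OrderIso.addRight_apply, hf0, F]
    have : x + 1 + -t = (x + -t) + 1 := by ring
    rw [this, Int.floor_add_one, Int.fract_add_one]
    push_cast
    ring
  · simp [hf0, F, hp.ne']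
  · simp only [OrderIso.trans_apply, OrderIso.addRight_apply, hf0, F]
    have h1 : t + a + -t = a := by ring
    rw [h1, Int.fract_eq_self.2 ⟨ha.le, ha'⟩, hap, Int.floor_eq_zero_iff.2 ⟨ha.le, ha'⟩]
    simp [add_comm]

/-- A path in the group of lifts from the identity to `f`. -/
theorem exists_path (f : ℝ ≃o ℝ) (hf : CircleLift f) :
    ∃ F : unitInterval → ℝ ≃o ℝ, (∀ s, CircleLift (F s)) ∧ F 0 = OrderIso.refl ℝ ∧ F 1 = f ∧
      Continuous (fun q : unitInterval × ℝ => F q.1 q.2) := by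
  let H : unitInterval → ℝ → ℝ := fun s x => (1 - (s : ℝ)) * x + s * f x
  have hc : Continuous (fun q : unitInterval × ℝ => H q.1 q.2) := by
    have := f.continuous
    simp only [H]
    fun_prop
  have hm : ∀ s, StrictMono (H s) := by
    intro s x y hxy
    have h1 := f.strictMono hxy
    have h0 := s.2.1
    have h2 := s.2.2
    simp only [H]
    rcases h0.eq_or_lt with h | h
    · rw [← h]; linarith
    · nlinarith
  have hone : ∀ s x, H s (x + 1) = H s x + 1 := by
    intro s x
    simp only [H, hf x]
    ring
  have hs : ∀ s, Function.Surjective (H s) := by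
    intro s
    let L : CircleDeg1Lift := ⟨⟨H s, (hm s).monotone⟩, hone s⟩
    refine (CircleDeg1Lift.continuous_iff_surjective L).1 ?_
    exact hc.comp (by fun_prop : Continuous fun x : ℝ => (s, x))
  refine ⟨fun s => StrictMono.orderIsoOfSurjective (H s) (hm s) (hs s), fun s x => hone s x,
    ?_, ?_, hc⟩
  · ext x
    simp [H]
  · ext x
    simp [H]

/-- Joint continuity of the inverses. -/
theorem continuous_symm_family {S : Type*} [TopologicalSpace S] (F : S → ℝ ≃o ℝ)
    (hF : Continuous (fun q : S × ℝ => F q.1 q.2)) :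
    Continuous (fun q : S × ℝ => (F q.1).symm q.2) := by
  rw [continuous_iff_continuousAt]
  rintro ⟨s, y⟩
  refine tendsto_order.2 ⟨fun a ha => ?_, fun a ha => ?_⟩
  · have ha' : F s a < y := (OrderIso.lt_symm_apply _).1 ha
    have h1 : Continuous (fun q : S × ℝ => F q.1 a) :=
      hF.comp (by fun_prop : Continuous fun q : S × ℝ => (q.1, a))
    have := (isOpen_lt h1 continuous_snd).mem_nhds (show (s, y) ∈ {q : S × ℝ | F q.1 a < q.2} from ha')
    filter_upwards [this] with q hq
    exact (OrderIso.lt_symm_apply _).2 hq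
  · have ha' : y < F s a := (OrderIso.symm_apply_lt _).1 ha
    have h1 : Continuous (fun q : S × ℝ => F q.1 a) :=
      hF.comp (by fun_prop : Continuous fun q : S × ℝ => (q.1, a))
    have := (isOpen_lt continuous_snd h1).mem_nhds (show (s, y) ∈ {q : S × ℝ | q.2 < F q.1 a} from ha')
    filter_upwards [this] with q hq
    exact (OrderIso.symm_apply_lt _).2 hq

theorem CircleLift.inv {f : ℝ ≃o ℝ} (hf : CircleLift f) : CircleLift f.symm := by
  intro t
  rw [OrderIso.symm_apply_eq, hf, OrderIso.apply_symm_apply]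

theorem CircleLift.comp {f g : ℝ ≃o ℝ} (hf : CircleLift f) (hg : CircleLift g) :
    CircleLift (f.trans g) := by
  intro t
  simp only [OrderIso.trans_apply]
  rw [hf, hg]

theorem CircleLift.comm {f g : ℝ ≃o ℝ} (hf : CircleLift f) (hg : CircleLift g) :
    CircleLift (commOI f g) :=
  (hg.inv.comp hf.inv).comp (hg.comp hf)

theorem composeList_cons (f : ℝ ≃o ℝ) (L : List (ℝ ≃o ℝ)) (x : ℝ) :
    composeList (f :: L) x = f (composeList L x) := rfl

theorem composeList_lift (L : List (ℝ ≃o ℝ)) (h : ∀ f ∈ L, CircleLift f) :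
    CircleLift (composeList L) := by
  induction L with
  | nil => intro t; rfl
  | cons f L ih =>
    intro t
    rw [composeList_cons, composeList_cons, ih (fun k hk => h k (by simp [hk])), h f (by simp)]

theorem composeList_id (L : List (ℝ ≃o ℝ)) (h : ∀ f ∈ L, ∀ x, f x = x) (x : ℝ) :
    composeList L x = x := by
  induction L with
  | nil => rfl
  | cons f L ih =>
    rw [composeList_cons, ih (fun k hk => h k (by simp [hk])), h f (by simp)]

theorem composeList_continuous {S : Type*} [TopologicalSpace S] (n : ℕ)
    (C : S → Fin n → ℝ ≃o ℝ) (hC : ∀ i, Continuous (fun q : S × ℝ => C q.1 i q.2)) :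
    Continuous (fun q : S × ℝ => composeList (List.ofFn (C q.1)) q.2) := by
  induction n with
  | zero => simpa [composeList] using continuous_snd
  | succ n ih =>
    have := ih (fun s i => C s i.succ) (fun i => hC i.succ)
    simp only [List.ofFn_succ, composeList_cons]
    exact (hC 0).comp (continuous_fst.prodMk this)

theorem composeList_chain (n : ℕ) (C : Fin n → ℝ ≃o ℝ) (x : ℕ → ℝ)
    (h : ∀ i : Fin n, C i (x (i + 1)) = x i) : composeList (List.ofFn C) (x n) = x 0 := by
  induction n generalizing x with
  | zero => rfl
  | succ n ih =>
    rw [List.ofFn_succ, composeList_cons,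
      ih (fun i => C i.succ) (fun k => x (k + 1)) (fun i => by simpa using h i.succ)]
    simpa using h 0

/-- The `CircleDeg1Lift` attached to a lift. -/
def deg1 (f : ℝ ≃o ℝ) (hf : CircleLift f) : CircleDeg1Lift := ⟨⟨f, f.monotone⟩, hf⟩

theorem continuous_transl {S : Type*} [TopologicalSpace S] (F : S → ℝ ≃o ℝ)
    (hl : ∀ s, CircleLift (F s)) (hF : Continuous (fun q : S × ℝ => F q.1 q.2)) :
    Continuous (fun s => (deg1 (F s) (hl s)).translationNumber) := by
  have hit : ∀ n : ℕ, Continuous (fun s => (F s)^[n] 0) := by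
    intro n
    induction n with
    | zero => simpa using continuous_const
    | succ n ih =>
      simp only [Function.iterate_succ_apply']
      exact hF.comp (continuous_id.prodMk ih)
  have hu : TendstoUniformly (fun (n : ℕ) s => (F s)^[n] 0 / (n : ℝ))
      (fun s => (deg1 (F s) (hl s)).translationNumber) Filter.atTop := by
    rw [Metric.tendstoUniformly_iff]
    intro ε hε
    filter_upwards [Filter.eventually_gt_atTop 0,
      tendsto_one_div_atTop_nhds_zero_nat.eventually (gt_mem_nhds hε)] with n hn hn2 s
    have h := CircleDeg1Lift.dist_pow_map_zero_mul_translationNumber_le (deg1 (F s) (hl s)) n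
    rw [CircleDeg1Lift.coe_pow, Real.dist_eq] at h
    have hn' : (0 : ℝ) < n := by exact_mod_cast hn
    change |(F s)^[n] 0 - _| ≤ 1 at h
    rw [dist_comm, Real.dist_eq]
    refine lt_of_le_of_lt ?_ hn2
    rw [le_div_iff₀ hn', ← abs_of_pos hn', ← abs_mul, abs_of_pos hn', sub_mul,
      div_mul_cancel₀ _ hn'.ne', mul_comm _ (n : ℝ)]
    exact h
  exact hu.continuous (Filter.Frequently.of_forall fun n => (hit n).div_const _)

/-- For every integer `g ≥ 1` and every real `c` with `1 - 2g < c ≤ 0`, there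
exist `φ̃₁, …, φ̃_{2g} ∈ 𝒯` such that the translation number
`lim_{n → ∞} (ψⁿ t - t)/n` of the product of commutators
`ψ = [φ̃₁, φ̃₂] ∘ ⋯ ∘ [φ̃_{2g-1}, φ̃_{2g}]` equals `c`. -/
theorem exists_commutator_product_translation_number (g : ℕ) (hg : 1 ≤ g)
    (c : ℝ) (hc₁ : 1 - 2 * g < c) (hc₂ : c ≤ 0) :
    ∃ φ : Fin (2 * g) → ℝ ≃o ℝ, (∀ i, CircleLift (φ i)) ∧
      ∀ t : ℝ, Filter.Tendsto
        (fun n : ℕ =>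
          ((⇑(composeList (List.ofFn fun i : Fin g =>
              commOI (φ ⟨2 * i.1, by have := i.2; omega⟩)
                (φ ⟨2 * i.1 + 1, by have := i.2; omega⟩))))^[n] t - t) / (n : ℝ))
        Filter.atTop (nhds c) := by
  have hg0 : (1 : ℝ) ≤ g := by exact_mod_cast hg
  obtain ⟨d, hd⟩ : ∃ d : ℝ, d = 1 / (4 * g) := ⟨_, rfl⟩
  have hdg : d * g = 1 / 4 := by rw [hd]; field_simp
  have hd0 : 0 < d := by rw [hd]; positivity
  have hd1 : d ≤ 1 / 4 := by nlinarith
  let a : ℕ → ℝ := fun i => i * (2 - 4 * d)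
  have hfe : ∀ i : ℕ, ∃ f : ℝ ≃o ℝ, CircleLift f ∧ f (a i) = a i + d ∧
      f (a i + (1 - d)) = a i + d + d := fun i =>
    exists_lift_two_points _ _ _ _ (by linarith) (by linarith) (by linarith) (by linarith)
  have hge : ∀ i : ℕ, ∃ f : ℝ ≃o ℝ, CircleLift f ∧ f (a i) = a i + (1 - d) ∧
      f (a i + d) = a i + (1 - d) + (1 - d) := fun i =>
    exists_lift_two_points _ _ _ _ (by linarith) (by linarith) (by linarith) (by linarith)
  choose f hfl hf1 hf2 using hfe
  choose k hkl hk1 hk2 using hge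
  choose F hFl hF0 hF1 hFc using fun i => exists_path (f i) (hfl i)
  let C : unitInterval → Fin g → ℝ ≃o ℝ := fun s i => commOI (F i s) (k i)
  let P : unitInterval → ℝ ≃o ℝ := fun s => composeList (List.ofFn (C s))
  have hPl : ∀ s, CircleLift (P s) := by
    intro s
    refine composeList_lift _ fun h hh => ?_
    obtain ⟨i, rfl⟩ := (List.mem_ofFn' _ _).1 hh
    exact (hFl i s).comm (hkl i)
  have hCc : ∀ i, Continuous (fun q : unitInterval × ℝ => C q.1 i q.2) := by
    intro i
    have h1 := hFc i
    have h2 := continuous_symm_family (F i) h1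
    have h3 := (k i).continuous
    have h4 := (k i).symm.continuous
    have e1 : Continuous (fun q : unitInterval × ℝ => (F i q.1).symm ((k i).symm q.2)) :=
      h2.comp (continuous_fst.prodMk (h4.comp continuous_snd))
    exact h1.comp (continuous_fst.prodMk (h3.comp e1))
  have hPc : Continuous (fun q : unitInterval × ℝ => P q.1 q.2) :=
    composeList_continuous g C hCc
  have hτ := continuous_transl P hPl hPc
  have h0 : (deg1 (P 0) (hPl 0)).translationNumber = 0 := by
    have h : (deg1 (P 0) (hPl 0)) 0 = 0 + ((0 : ℤ) : ℝ) := by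
      change composeList (List.ofFn (C 0)) 0 = _
      rw [composeList_id]
      · simp
      · intro h hh x
        obtain ⟨i, rfl⟩ := (List.mem_ofFn' _ _).1 hh
        simp [C, commOI, hF0]
    simpa using CircleDeg1Lift.translationNumber_of_eq_add_int _ h
  have h1 : (deg1 (P 1) (hPl 1)).translationNumber = 1 - 2 * g := by
    let x : ℕ → ℝ := fun i => a i + d + d
    have hch : P 1 (x g) = x 0 := by
      refine composeList_chain g (C 1) x fun i => ?_
      have e1 : x (i + 1) = k i (a i + d) := by
        rw [hk2]
        simp only [x, a]
        push_cast
        ring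
      simp only [C, commOI, OrderIso.trans_apply, hF1, e1, OrderIso.symm_apply_apply]
      rw [← hf1, OrderIso.symm_apply_apply, hk1, hf2, ← hf1]
      simp only [x, hf1]
    have h : (deg1 (P 1) (hPl 1)) (x g) = x g + ((1 - 2 * g : ℤ) : ℝ) := by
      change P 1 (x g) = _
      rw [hch]
      simp only [x, a]
      push_cast
      linarith
    simpa using CircleDeg1Lift.translationNumber_of_eq_add_int _ h
  obtain ⟨s, hs⟩ := mem_range_of_exists_le_of_exists_ge (c := c) hτ ⟨1, by rw [h1]; exact hc₁.le⟩
    ⟨0, by rw [h0]; exact hc₂⟩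
  refine ⟨fun j => if j.1 % 2 = 0 then F (j.1 / 2) s else k (j.1 / 2), ?_, ?_⟩
  · intro j
    dsimp only
    split_ifs
    · exact hFl _ _
    · exact hkl _
  · intro t
    have e : (fun i : Fin g => commOI
        (if (2 * i.1) % 2 = 0 then F (2 * i.1 / 2) s else k (2 * i.1 / 2))
        (if (2 * i.1 + 1) % 2 = 0 then F ((2 * i.1 + 1) / 2) s else k ((2 * i.1 + 1) / 2)))
        = C s := by
      funext i
      have e1 : (2 * i.1) % 2 = 0 := by omega
      have e2 : ¬ (2 * i.1 + 1) % 2 = 0 := by omega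
      have e3 : 2 * i.1 / 2 = i.1 := by omega
      have e4 : (2 * i.1 + 1) / 2 = i.1 := by omega
      rw [if_pos e1, if_neg e2, e3, e4]
    dsimp only
    rw [e]
    have := CircleDeg1Lift.tendsto_translationNumber (deg1 (P s) (hPl s)) t
    simp only [CircleDeg1Lift.coe_pow] at this
    dsimp only at hs
    rw [hs] at this
    exact this
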